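/- Let G = (V,E) be a directed graph with edge costs c : E → {1,...,C}, and disjoint k-element sets X, Y. Fix a cost bound U and let H be the family of all proper sets of k walks from X to Y of total cost at most U (edge costs counted with multiplicity). Let CQ = \sum_{S ∈ H} \prod_{W ∈ S} M_W over a field of characteristic 2, where M_W is the monomial of edge multiplicities of W. Then CQ is not the zero polynomial if and only if there is a proper set of k pairwise vertex-disjoint walks in G of total cost at most U. -/

import Mathlib

set_option autoImplicit false

open scoped Classical

noncomputable section

variable {V : Type*}

/-- The list of edge occurrences of a walk given by its list of vertices. -/
def edgesOf (w : List V) : List (V × V) := w.zip w.tail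

/-- `w` is a walk in the directed graph `E` from the source set `X` to the sink
set `Y`: it has at least two vertices, consecutive vertices are joined by edges,
its first vertex is in `X`, its last vertex is in `Y`, and all intermediate
vertices lie outside `X ∪ Y`. -/
def IsWalk (E : V → V → Prop) (X Y : Set V) (w : List V) : Prop :=
  2 ≤ w.length ∧ w.Chain' E ∧
    (∀ a, w.head? = some a → a ∈ X) ∧
    (∀ b, w.getLast? = some b → b ∈ Y) ∧
    ∀ v ∈ w.tail.dropLast, v ∉ X ∧ v ∉ Y

/-- A proper (indexed) set of `k` walks: each member is a walk from `X` to `Y`,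
and the walks have pairwise distinct start vertices and pairwise distinct end
vertices. -/
def Proper (E : V → V → Prop) (X Y : Set V) {k : ℕ} (S : Fin k → List V) : Prop :=
  (∀ i, IsWalk E X Y (S i)) ∧
    Function.Injective (fun i => (S i).head?) ∧
    Function.Injective (fun i => (S i).getLast?)

/-- The walks `S i` are pairwise vertex-disjoint. -/
def Disjointly {k : ℕ} (S : Fin k → List V) : Prop :=
  ∀ i j, i ≠ j → ∀ v, v ∈ S i → v ∉ S j

/-- The total length of an indexed set of walks (each walk on `m` vertices has
length `m - 1`). -/
def totalLen {k : ℕ} (S : Fin k → List V) : ℕ := ∑ i, ((S i).length - 1)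


/-- A proper (unordered) set of `k` walks. -/
def ProperSet (E : V → V → Prop) (X Y : Set V) (k : ℕ) (S : Finset (List V)) : Prop :=
  S.card = k ∧ (∀ w ∈ S, IsWalk E X Y w) ∧
    (∀ w ∈ S, ∀ w' ∈ S, w ≠ w' → w.head? ≠ w'.head? ∧ w.getLast? ≠ w'.getLast?)

/-- The monomial `M_W` of a walk `W`. -/
def walkMonomial (F : Type*) [Field F] (w : List V) : MvPolynomial (V × V) F :=
  (edgesOf w).map (fun e => MvPolynomial.X e) |>.prod

/-- The cost of a walk: the sum of the costs of its edge occurrences. -/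
def walkCost (c : V × V → ℕ) (w : List V) : ℕ := ((edgesOf w).map c).sum

/-- Loop erasure (processing the walk from its end). -/
def loopErase : List V → List V
  | [] => []
  | a :: l => if a ∈ loopErase l then (loopErase l).dropWhile (fun u => decide (u ≠ a))
      else a :: loopErase l

theorem dropWhile_ne_split (a : V) (L : List V) (h : a ∈ L) :
    ∃ D B, L = D ++ a :: B ∧ L.dropWhile (fun u => decide (u ≠ a)) = a :: B := by
  induction L with
  | nil => simp at h
  | cons b L ih =>
    by_cases hb : b = a
    · subst hb
      exact ⟨[], L, rfl, by simp⟩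
    · have : a ∈ L := by
        rcases List.mem_cons.1 h with h | h
        · exact absurd h.symm hb
        · exact h
      obtain ⟨D, B, h1, h2⟩ := ih this
      refine ⟨b :: D, B, by simp [h1], ?_⟩
      rw [List.dropWhile_cons_of_pos (by simpa using hb)]
      exact h2

/-- The two cases of loop erasure. -/
theorem loopErase_cons (a : V) (l : List V) :
    (a ∉ loopErase l ∧ loopErase (a :: l) = a :: loopErase l) ∨
    (∃ D B, loopErase l = D ++ a :: B ∧ loopErase (a :: l) = a :: B) := by
  by_cases h : a ∈ loopErase l
  · obtain ⟨D, B, h1, h2⟩ := dropWhile_ne_split a _ h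
    exact Or.inr ⟨D, B, h1, by rw [loopErase, if_pos h, h2]⟩
  · exact Or.inl ⟨h, by rw [loopErase, if_neg h]⟩

theorem loopErase_head (a : V) (l : List V) : ∃ B, loopErase (a :: l) = a :: B := by
  rcases loopErase_cons a l with ⟨_, h⟩ | ⟨D, B, _, h⟩
  · exact ⟨_, h⟩
  · exact ⟨_, h⟩

theorem loopErase_nodup (l : List V) : (loopErase l).Nodup := by
  induction l with
  | nil => simp [loopErase]
  | cons a l ih =>
    rcases loopErase_cons a l with ⟨h, h'⟩ | ⟨D, B, h, h'⟩
    · rw [h', List.nodup_cons]; exact ⟨h, ih⟩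
    · rw [h']; rw [h] at ih; exact (List.nodup_append.1 ih).2.1

theorem loopErase_subset (l : List V) : ∀ u ∈ loopErase l, u ∈ l := by
  induction l with
  | nil => simp [loopErase]
  | cons a l ih =>
    intro u hu
    rcases loopErase_cons a l with ⟨h, h'⟩ | ⟨D, B, h, h'⟩
    · grind
    · grind

theorem loopErase_head? (l : List V) : (loopErase l).head? = l.head? := by
  cases l with
  | nil => simp [loopErase]
  | cons a l => obtain ⟨B, h⟩ := loopErase_head a l; rw [h]; rfl

theorem loopErase_getLast? (l : List V) : (loopErase l).getLast? = l.getLast? := by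
  induction l with
  | nil => simp [loopErase]
  | cons a l ih =>
    rcases loopErase_cons a l with ⟨h, h'⟩ | ⟨D, B, h, h'⟩
    · rw [h', List.getLast?_cons, List.getLast?_cons, ih]
    · rw [h', List.getLast?_cons (l := l), ← ih, h]
      simp [List.getLast?_cons]

theorem loopErase_chain (E : V → V → Prop) (l : List V) (hl : l.IsChain E) :
    (loopErase l).IsChain E := by
  induction l with
  | nil => simp [loopErase]
  | cons a l ih =>
    have ih' := ih hl.tail
    rcases loopErase_cons a l with ⟨h, h'⟩ | ⟨D, B, h, h'⟩
    · rw [h', List.isChain_cons]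
      rw [List.isChain_cons] at hl
      rw [loopErase_head?]
      exact ⟨hl.1, ih'⟩
    · rw [h']; rw [h] at ih'; exact ih'.right_of_append

theorem edgesOf_append (P : List V) (v : V) (Q : List V) :
    edgesOf (P ++ v :: Q) = edgesOf (P ++ [v]) ++ edgesOf (v :: Q) := by
  induction P with
  | nil => simp [edgesOf]
  | cons a P ih =>
    cases P with
    | nil => simp [edgesOf]
    | cons b P => simpa [edgesOf] using ih

theorem edgesOf_cons_cons (a b : V) (l : List V) :
    edgesOf (a :: b :: l) = (a, b) :: edgesOf (b :: l) := by
  simp [edgesOf]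

theorem walkCost_append (c : V × V → ℕ) (P : List V) (v : V) (Q : List V) :
    walkCost c (P ++ v :: Q) = walkCost c (P ++ [v]) + walkCost c (v :: Q) := by
  simp only [walkCost, edgesOf_append P v Q, List.map_append, List.sum_append]

theorem walkMonomial_append (F : Type*) [Field F] (P : List V) (v : V) (Q : List V) :
    walkMonomial F (P ++ v :: Q) = walkMonomial F (P ++ [v]) * walkMonomial F (v :: Q) := by
  simp only [walkMonomial, edgesOf_append P v Q, List.map_append, List.prod_append]

theorem loopErase_cost (c : V × V → ℕ) (l : List V) :
    walkCost c (loopErase l) ≤ walkCost c l := by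
  induction l with
  | nil => simp [loopErase]
  | cons a l ih =>
    cases l with
    | nil => simp [loopErase]
    | cons b l =>
      have e : walkCost c (a :: b :: l) = c (a, b) + walkCost c (b :: l) := by
        simp [walkCost, edgesOf_cons_cons]
      rcases loopErase_cons a (b :: l) with ⟨h, h'⟩ | ⟨D, B, h, h'⟩
      · obtain ⟨B, hB⟩ := loopErase_head b l
        have e' : walkCost c (a :: b :: B) = c (a, b) + walkCost c (b :: B) := by
          simp [walkCost, edgesOf_cons_cons]
        rw [h', e, hB, e', ← hB]; omega
      · rw [h', e]; rw [h, walkCost_append] at ih; omega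

theorem loopErase_append (P Z : List V) (h : ∀ u ∈ P, u ∉ loopErase Z) :
    ∃ R, loopErase (P ++ Z) = R ++ loopErase Z ∧ ∀ u ∈ R, u ∈ P := by
  induction P with
  | nil => exact ⟨[], by simp, by simp⟩
  | cons p P ih =>
    obtain ⟨R, h1, h2⟩ := ih (fun u hu => h u (by simp [hu]))
    rcases loopErase_cons p (P ++ Z) with ⟨h3, h4⟩ | ⟨D, B, h3, h4⟩
    · exact ⟨p :: R, by simp [h4, h1], by grind⟩
    · rw [h1] at h3
      have hp := h p (by simp)
      rcases List.append_eq_append_iff.1 h3 with ⟨A, h5, h6⟩ | ⟨A, h5, h6⟩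
      · exact absurd (by rw [h6]; simp) hp
      · cases A with
        | nil => exact absurd (by simp at h6; rw [← h6]; simp) hp
        | cons x A =>
          simp only [List.cons_append, List.cons.injEq] at h6
          refine ⟨p :: A, by simp [h4, h6.2], ?_⟩
          grind

theorem loopErase_split (w : List V) : ∀ (A : List V) (v : V) (B : List V),
    loopErase w = A ++ v :: B →
    ∃ P Q, w = P ++ v :: Q ∧ loopErase (v :: Q) = v :: B ∧ ∀ u ∈ P, u ∉ v :: B := by
  induction w with
  | nil => intro A v B h; simp [loopErase] at h
  | cons a l ih =>
    intro A v B h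
    rcases loopErase_cons a l with ⟨h3, h4⟩ | ⟨D, B', h3, h4⟩
    · rw [h4] at h
      cases A with
      | nil =>
        simp only [List.nil_append, List.cons.injEq] at h
        exact ⟨[], l, by simp [h.1], by rw [← h.1, h4, h.2], by simp⟩
      | cons x A =>
        simp only [List.cons_append, List.cons.injEq] at h
        obtain ⟨P, Q, h5, h6, h7⟩ := ih A v B h.2
        refine ⟨a :: P, Q, by simp [h5], h6, ?_⟩
        have := h.2
        grind
    · have h0 := h
      rw [h4] at h
      have nd := loopErase_nodup (a :: l)
      cases A with
      | nil =>
        simp only [List.nil_append, List.cons.injEq] at h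
        exact ⟨[], l, by simp [h.1], by rw [← h.1, h4, h.2], by simp⟩
      | cons x A =>
        obtain ⟨P, Q, h5, h6, h7⟩ := ih (D ++ x :: A) v B (by rw [h3, h]; simp)
        refine ⟨a :: P, Q, by simp [h5], h6, ?_⟩
        simp only [List.cons_append, List.cons.injEq] at h
        rw [h4, h.2, List.nodup_cons] at nd
        grind

theorem last_split (T : V → Prop) (L : List V) (h : ∃ u ∈ L, T u) :
    ∃ A v B, L = A ++ v :: B ∧ T v ∧ ∀ u ∈ B, ¬ T u := by
  induction L with
  | nil => simp at h
  | cons a L ih =>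
    by_cases h' : ∃ u ∈ L, T u
    · obtain ⟨A, v, B, h1, h2, h3⟩ := ih h'
      exact ⟨a :: A, v, B, by simp [h1], h2, h3⟩
    · push Not at h'
      refine ⟨[], a, L, rfl, ?_, h'⟩
      grind

theorem last_split_unique (T : V → Prop) : ∀ (A A' : List V) (v v' : V) (B B' : List V),
    A ++ v :: B = A' ++ v' :: B' → T v → T v' → (∀ u ∈ B, ¬ T u) → (∀ u ∈ B', ¬ T u) →
    v = v' := by
  intro A A' v v' B B' h hv hv' hB hB'
  rcases List.append_eq_append_iff.1 h with ⟨C, h5, h6⟩ | ⟨C, h5, h6⟩ <;> cases C <;> grind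

theorem first_split_unique : ∀ (P P' : List V) (v : V) (Q Q' : List V),
    P ++ v :: Q = P' ++ v :: Q' → v ∉ P → v ∉ P' → P = P' ∧ Q = Q' := by
  intro P P' v Q Q' h hv hv'
  rcases List.append_eq_append_iff.1 h with ⟨C, h5, h6⟩ | ⟨C, h5, h6⟩ <;> cases C <;> grind

/-- A more convenient characterization of walks. -/
theorem isWalk_iff (E : V → V → Prop) (X Y : Set V) (hXY : Disjoint X Y) (w : List V) :
    IsWalk E X Y w ↔ w ≠ [] ∧ w.IsChain E ∧
    (∀ a, w.head? = some a → a ∈ X) ∧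
    (∀ b, w.getLast? = some b → b ∈ Y) ∧ (∀ v ∈ w.tail, v ∉ X) ∧ (∀ v ∈ w.dropLast, v ∉ Y) := by
  have hd : ∀ a, a ∈ X → a ∉ Y := fun a h => Set.disjoint_left.1 hXY h
  have hC : w.Chain' E ↔ w.IsChain E := Iff.rfl
  unfold IsWalk
  rw [hC]
  clear hC
  rcases w with _ | ⟨a, l⟩
  · simp
  · rcases List.eq_nil_or_concat l with rfl | ⟨m, b, rfl⟩
    · simp; intro _ h; exact hd _ ‹_› h
    · have e : (a :: (m ++ [b])).dropLast = a :: m := by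
        rw [← List.cons_append, List.dropLast_concat]
      have e' : (a :: (m ++ [b])).getLast? = some b := by
        rw [← List.cons_append, List.getLast?_concat]
      simp only [List.concat_eq_append, e, e', List.tail_cons, List.dropLast_concat]
      simp
      grind

theorem loopErase_isWalk (E : V → V → Prop) (X Y : Set V) (hXY : Disjoint X Y) (w : List V)
    (hw : IsWalk E X Y w) : IsWalk E X Y (loopErase w) := by
  rw [isWalk_iff E X Y hXY] at hw ⊢
  obtain ⟨h1, h2, h3, h4, h5, h6⟩ := hw
  have nd := loopErase_nodup w
  have hs := loopErase_subset w
  have hh := loopErase_head? w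
  have hl := loopErase_getLast? w
  refine ⟨?_, loopErase_chain E w h2, by rwa [hh], by rwa [hl], ?_, ?_⟩
  · intro h; rw [h] at hh
    cases w with
    | nil => exact h1 rfl
    | cons a l => simp at hh
  · cases w with
    | nil => simp [loopErase]
    | cons a l =>
      obtain ⟨B, hB⟩ := loopErase_head a l
      rw [hB] at nd hs ⊢
      rw [List.nodup_cons] at nd
      intro v hv
      simp only [List.tail_cons] at hv h5
      have := hs v (by simp [hv])
      rcases List.mem_cons.1 this with h | h
      · subst h; exact absurd hv nd.1
      · exact h5 v h
  · rcases List.eq_nil_or_concat w with rfl | ⟨l, b, rfl⟩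
    · simp [loopErase]
    · rcases List.eq_nil_or_concat (loopErase (l.concat b)) with h | ⟨B, b', hB⟩
      · rw [h]; simp
      · rw [hB] at nd hs hl ⊢
        simp only [List.concat_eq_append, List.getLast?_concat, Option.some.injEq] at *
        subst hl
        simp only [List.dropLast_concat] at h6 ⊢
        intro v hv
        have := hs v (by simp [hv])
        rw [List.nodup_append] at nd
        have h7 := nd.2.2 v hv b' (by simp)
        apply h6
        simpa [h7] using this

theorem swap_isWalk (E : V → V → Prop) (X Y : Set V) (hXY : Disjoint X Y)
    (P P' : List V) (v : V) (Q Q' : List V)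
    (hw : IsWalk E X Y (P ++ v :: Q)) (hw' : IsWalk E X Y (P' ++ v :: Q')) :
    IsWalk E X Y (P' ++ v :: Q) := by
  rw [isWalk_iff E X Y hXY] at hw hw' ⊢
  obtain ⟨h1, h2, h3, h4, h5, h6⟩ := hw
  obtain ⟨h1', h2', h3', h4', h5', h6'⟩ := hw'
  refine ⟨by simp, ?_, ?_, ?_, ?_, ?_⟩
  · rw [List.isChain_split] at h2 h2' ⊢
    exact ⟨h2'.1, h2.2⟩
  · intro a ha
    apply h3'
    rw [← ha]
    cases P' <;> rfl
  · intro a ha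
    apply h4
    rw [← ha]
    simp [List.getLast?_append, List.getLast?_cons]
  · intro u hu
    cases P' with
    | nil =>
      apply h5
      cases P with
      | nil => exact hu
      | cons p P => simp at hu ⊢; simp [hu]
    | cons p' P' =>
      simp only [List.cons_append, List.tail_cons, List.mem_append, List.mem_cons] at hu h5'
      rcases hu with hu | hu | hu
      · exact h5' u (Or.inl hu)
      · exact h5' u (Or.inr (Or.inl hu))
      · apply h5
        cases P with
        | nil => exact hu
        | cons p P => simp [hu]
  · intro u hu
    rw [List.dropLast_append_of_ne_nil (by simp)] at hu h6 h6'
    rw [List.mem_append] at hu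
    rcases hu with hu | hu
    · exact h6' u (by simp [hu])
    · exact h6 u (by simp [hu])

/-- Loop erasing all members of a proper set of walks. -/
theorem erase_proper (E : V → V → Prop) (X Y : Set V) (hXY : Disjoint X Y) (k : ℕ)
    (c : V × V → ℕ) (S : Finset (List V)) (hS : ProperSet E X Y k S)
    (hd : ∀ w ∈ S, ∀ w' ∈ S, w ≠ w' → ∀ v, v ∈ loopErase w → v ∉ loopErase w') :
    ProperSet E X Y k (S.image loopErase) ∧
    (∑ w ∈ S.image loopErase, walkCost c w) ≤ ∑ w ∈ S, walkCost c w ∧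
    (∀ w ∈ S.image loopErase, ∀ w' ∈ S.image loopErase, w ≠ w' → ∀ v, v ∈ w → v ∉ w') ∧
    ∀ w ∈ S.image loopErase, w.Nodup := by
  obtain ⟨h1, h2, h3⟩ := hS
  have inj : Set.InjOn loopErase (S : Set (List V)) := by
    intro w hw w' hw' h
    by_contra hne
    apply (h3 w hw w' hw' hne).1
    rw [← loopErase_head? w, ← loopErase_head? w', h]
  refine ⟨⟨?_, ?_, ?_⟩, ?_, ?_, ?_⟩
  · rw [Finset.card_image_of_injOn inj, h1]
  · intro w hw
    obtain ⟨x, hx, rfl⟩ := Finset.mem_image.1 hw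
    exact loopErase_isWalk E X Y hXY x (h2 x hx)
  · intro w hw w' hw' hne
    obtain ⟨x, hx, rfl⟩ := Finset.mem_image.1 hw
    obtain ⟨x', hx', rfl⟩ := Finset.mem_image.1 hw'
    simp only [loopErase_head?, loopErase_getLast?]
    exact h3 x hx x' hx' (fun h => hne (by rw [h]))
  · rw [Finset.sum_image inj]
    exact Finset.sum_le_sum (fun w _ => loopErase_cost c w)
  · intro w hw w' hw' hne
    obtain ⟨x, hx, rfl⟩ := Finset.mem_image.1 hw
    obtain ⟨x', hx', rfl⟩ := Finset.mem_image.1 hw'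
    exact hd x hx x' hx' (fun h => hne (by rw [h]))
  · intro w hw
    obtain ⟨x, hx, rfl⟩ := Finset.mem_image.1 hw
    exact loopErase_nodup x

/-- The sort key of a walk: its last vertex, embedded in a linear order. -/
def wkey (w : List V) : Cardinal := embeddingToCardinal w.getLast?

theorem wkey_inj (w w' : List V) (h : wkey w = wkey w') : w.getLast? = w'.getLast? :=
  embeddingToCardinal.injective h

theorem wkey_append (P P' : List V) (v : V) (Q : List V) :
    wkey (P ++ v :: Q) = wkey (P' ++ v :: Q) := by
  unfold wkey
  congr 1
  simp [List.getLast?_append, List.getLast?_cons]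

/-- The data of the swap in a set of walks. -/
structure Sel (S R : Finset (List V)) (P P' : List V) (v : V) (Q Q' : List V) : Prop where
  eqS : S = insert (P ++ v :: Q) (insert (P' ++ v :: Q') R)
  fresh : ∀ x ∈ R, wkey x ≠ wkey (P ++ v :: Q) ∧ wkey x ≠ wkey (P' ++ v :: Q')
  lt : wkey (P ++ v :: Q) < wkey (P' ++ v :: Q')
  nP : v ∉ P
  nP' : v ∉ P'
  disj : ∀ u ∈ P, u ∉ loopErase (v :: Q)
  first : ∀ u ∈ (loopErase (v :: Q)).tail, ∀ x ∈ S, wkey (P ++ v :: Q) < wkey x → u ∉ x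
  least : ∀ x ∈ S, wkey (P ++ v :: Q) < wkey x → v ∈ x → wkey (P' ++ v :: Q') ≤ wkey x
  before : ∀ x ∈ S, wkey x < wkey (P ++ v :: Q) → ∀ y ∈ S, wkey x < wkey y →
    ∀ u ∈ loopErase x, u ∉ y

theorem Sel.symm {S R : Finset (List V)} {P P' : List V} {v : V} {Q Q' : List V}
    (h : Sel S R P P' v Q Q') :
    Sel (insert (P' ++ v :: Q) (insert (P ++ v :: Q') R)) R P' P v Q Q' := by
  obtain ⟨B, hB⟩ := loopErase_head v Q
  have k1 := wkey_append P' P v Q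
  have k2 := wkey_append P P' v Q'
  have hw : P ++ v :: Q ∈ S := by rw [h.eqS]; simp
  have hw' : P' ++ v :: Q' ∈ S := by rw [h.eqS]; simp
  have hR : ∀ x ∈ R, x ∈ S := by intro x hx; rw [h.eqS]; simp [hx]
  have fw' : ∀ u ∈ B, u ∉ P' ++ v :: Q' := by
    intro u hu
    exact h.first u (by rw [hB]; exact hu) _ hw' h.lt
  constructor
  · rfl
  · rw [k1, k2]; exact h.fresh
  · rw [k1, k2]; exact h.lt
  · exact h.nP'
  · exact h.nP
  · intro u hu hu'
    rw [hB] at hu'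
    rcases List.mem_cons.1 hu' with rfl | hu'
    · exact h.nP' hu
    · exact fw' u hu' (by simp [hu])
  · rw [k1]
    intro u hu x hx hlt
    rw [Finset.mem_insert, Finset.mem_insert] at hx
    rcases hx with rfl | rfl | hx
    · rw [k1] at hlt; exact absurd hlt (lt_irrefl _)
    · intro hu'
      rcases List.mem_append.1 hu' with h1 | h1
      · exact h.disj u h1 (List.mem_of_mem_tail hu)
      · rw [hB] at hu
        exact fw' u hu (List.mem_append_right _ h1)
    · exact h.first u hu x (hR x hx) hlt
  · rw [k1, k2]
    intro x hx hlt hv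
    rw [Finset.mem_insert, Finset.mem_insert] at hx
    rcases hx with rfl | rfl | hx
    · rw [k1] at hlt; exact absurd hlt (lt_irrefl _)
    · rw [k2]
    · exact h.least x (hR x hx) hlt hv
  · rw [k1]
    intro x hx hlt y hy hxy u hu hu'
    rw [Finset.mem_insert, Finset.mem_insert] at hx hy
    have hxR : x ∈ R := by
      rcases hx with rfl | rfl | hx
      · rw [k1] at hlt; exact absurd hlt (lt_irrefl _)
      · rw [k2] at hlt; exact absurd hlt (not_lt_of_gt h.lt)
      · exact hx
    have n1 := h.before x (hR x hxR) hlt _ hw hlt u hu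
    have n2 := h.before x (hR x hxR) hlt _ hw' (hlt.trans h.lt) u hu
    simp only [List.mem_append, List.mem_cons, not_or] at n1 n2
    rcases hy with rfl | rfl | hy
    · simp only [List.mem_append, List.mem_cons] at hu'; tauto
    · simp only [List.mem_append, List.mem_cons] at hu'; tauto
    · exact h.before x (hR x hxR) hlt y (hR y hy) hxy u hu hu'

theorem Sel.mem_erase {S R : Finset (List V)} {P P' : List V} {v : V} {Q Q' : List V}
    (h : Sel S R P P' v Q Q') : ∃ A B, loopErase (P ++ v :: Q) = A ++ v :: B ∧
      loopErase (v :: Q) = v :: B := by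
  obtain ⟨B, hB⟩ := loopErase_head v Q
  obtain ⟨A, hA, -⟩ := loopErase_append P (v :: Q) h.disj
  exact ⟨A, B, by rw [hA, hB], hB⟩

theorem Sel.rest {S R : Finset (List V)} {P P' : List V} {v : V} {Q Q' : List V}
    (h : Sel S R P P' v Q Q') : R = (S.erase (P ++ v :: Q)).erase (P' ++ v :: Q') := by
  have n1 : P ++ v :: Q ∉ R := fun hx => (h.fresh _ hx).1 rfl
  have n2 : P' ++ v :: Q' ∉ R := fun hx => (h.fresh _ hx).2 rfl
  have n3 : P ++ v :: Q ≠ P' ++ v :: Q' := fun e => (h.lt).ne (by rw [e])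
  rw [h.eqS, Finset.erase_insert (by simp [n1]; simpa using n3), Finset.erase_insert n2]

theorem Sel.unique {S R R₂ : Finset (List V)} {P P' P₂ P₂' : List V} {v v₂ : V}
    {Q Q' Q₂ Q₂' : List V}
    (hS : ∀ w ∈ S, ∀ w' ∈ S, wkey w = wkey w' → w = w')
    (h : Sel S R P P' v Q Q') (h₂ : Sel S R₂ P₂ P₂' v₂ Q₂ Q₂') :
    R = R₂ ∧ P = P₂ ∧ P' = P₂' ∧ v = v₂ ∧ Q = Q₂ ∧ Q' = Q₂' := by
  have hw : P ++ v :: Q ∈ S := by rw [h.eqS]; simp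
  have hw' : P' ++ v :: Q' ∈ S := by rw [h.eqS]; simp
  have hw₂ : P₂ ++ v₂ :: Q₂ ∈ S := by rw [h₂.eqS]; simp
  have hw₂' : P₂' ++ v₂ :: Q₂' ∈ S := by rw [h₂.eqS]; simp
  obtain ⟨A, B, hA, hB⟩ := h.mem_erase
  obtain ⟨A₂, B₂, hA₂, hB₂⟩ := h₂.mem_erase
  have e1 : P ++ v :: Q = P₂ ++ v₂ :: Q₂ := by
    apply hS _ hw _ hw₂
    rcases lt_trichotomy (wkey (P ++ v :: Q)) (wkey (P₂ ++ v₂ :: Q₂)) with hlt | he | hlt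
    · exact absurd (by simp) (h₂.before _ hw hlt _ hw' h.lt v (by rw [hA]; simp))
    · exact he
    · exact absurd (by simp) (h.before _ hw₂ hlt _ hw₂' h₂.lt v₂ (by rw [hA₂]; simp))
  have ev : v = v₂ := by
    apply last_split_unique (fun u => ∃ x ∈ S, wkey (P ++ v :: Q) < wkey x ∧ u ∈ x)
      A A₂ v v₂ B B₂
    · rw [← hA, ← hA₂, e1]
    · exact ⟨_, hw', h.lt, by simp⟩
    · exact ⟨_, hw₂', by rw [e1]; exact h₂.lt, by simp⟩
    · rintro u hu ⟨x, hx, hlt, hux⟩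
      exact h.first u (by rw [hB]; exact hu) x hx hlt hux
    · rintro u hu ⟨x, hx, hlt, hux⟩
      rw [e1] at hlt
      exact h₂.first u (by rw [hB₂]; exact hu) x hx hlt hux
  subst ev
  have e2 : P' ++ v :: Q' = P₂' ++ v :: Q₂' := by
    apply hS _ hw' _ hw₂'
    apply le_antisymm
    · exact h.least _ hw₂' (by rw [e1]; exact h₂.lt) (by simp)
    · exact h₂.least _ hw' (by rw [← e1]; exact h.lt) (by simp)
  have e3 := first_split_unique _ _ _ _ _ e1 h.nP h₂.nP
  have e4 := first_split_unique _ _ _ _ _ e2 h.nP' h₂.nP'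
  refine ⟨?_, e3.1, e4.1, rfl, e3.2, e4.2⟩
  rw [h.rest, h₂.rest, e1, e2]

theorem first_occ (v : V) (w : List V) (h : v ∈ w) : ∃ P Q, w = P ++ v :: Q ∧ v ∉ P := by
  induction w with
  | nil => simp at h
  | cons a l ih =>
    by_cases hv : v = a
    · subst hv; exact ⟨[], l, rfl, by simp⟩
    · obtain ⟨P, Q, h1, h2⟩ := ih (by simpa [hv] using h)
      exact ⟨a :: P, Q, by simp [h1], by simp [hv, h2]⟩

theorem Sel.exists {S : Finset (List V)}
    (hS : ∀ w ∈ S, ∀ w' ∈ S, wkey w = wkey w' → w = w')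
    (hbad : ∃ w ∈ S, ∃ w' ∈ S, wkey w < wkey w' ∧ ∃ u ∈ loopErase w, u ∈ w') :
    ∃ R P P' v Q Q', Sel S R P P' v Q Q' := by
  have hne : (S.filter (fun w => ∃ w' ∈ S, wkey w < wkey w' ∧ ∃ u ∈ loopErase w, u ∈ w')).Nonempty := by
    obtain ⟨w, hw, h⟩ := hbad
    exact ⟨w, Finset.mem_filter.2 ⟨hw, h⟩⟩
  obtain ⟨w, hw, hmin⟩ := Finset.exists_min_image _ wkey hne
  rw [Finset.mem_filter] at hw
  obtain ⟨hw, x, hx, hlt, u, hu, hux⟩ := hw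
  obtain ⟨A, v, B, hA, ⟨y, hy, hwy, hvy⟩, hB⟩ :=
    last_split (fun u => ∃ x ∈ S, wkey w < wkey x ∧ u ∈ x) (loopErase w) ⟨u, hu, x, hx, hlt, hux⟩
  obtain ⟨P, Q, rfl, hvQ, hP⟩ := loopErase_split w A v B hA
  have hne' : (S.filter (fun x => wkey (P ++ v :: Q) < wkey x ∧ v ∈ x)).Nonempty :=
    ⟨y, Finset.mem_filter.2 ⟨hy, hwy, hvy⟩⟩
  obtain ⟨w', hw', hmin'⟩ := Finset.exists_min_image _ wkey hne'
  rw [Finset.mem_filter] at hw'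
  obtain ⟨hw', hlt', hv'⟩ := hw'
  obtain ⟨P', Q', rfl, hP'⟩ := first_occ v w' hv'
  refine ⟨(S.erase (P ++ v :: Q)).erase (P' ++ v :: Q'), P, P', v, Q, Q', ?_⟩
  constructor
  · have : P' ++ v :: Q' ∈ S.erase (P ++ v :: Q) :=
      Finset.mem_erase.2 ⟨fun e => hlt'.ne (by rw [e]), hw'⟩
    rw [Finset.insert_erase this, Finset.insert_erase hw]
  · intro z hz
    rw [Finset.mem_erase, Finset.mem_erase] at hz
    exact ⟨fun e => hz.2.1 (hS _ hz.2.2 _ hw e), fun e => hz.1 (hS _ hz.2.2 _ hw' e)⟩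
  · exact hlt'
  · intro h; exact hP v h (by simp)
  · exact hP'
  · rw [hvQ]; exact hP
  · rw [hvQ]
    intro u hu x hx hlt hux
    exact hB u hu ⟨x, hx, hlt, hux⟩
  · intro x hx hlt hvx
    exact hmin' x (Finset.mem_filter.2 ⟨hx, hlt, hvx⟩)
  · intro x hx hlt y hy hxy u hu huy
    exact absurd (hmin x (Finset.mem_filter.2 ⟨hx, y, hy, hxy, u, hu, huy⟩)) (not_le_of_gt hlt)

/-- The swap relation between sets of walks. -/
def SwapRel (S S' : Finset (List V)) : Prop :=
  ∃ R P P' v Q Q', Sel S R P P' v Q Q' ∧ S' = insert (P' ++ v :: Q) (insert (P ++ v :: Q') R)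

theorem SwapRel.symm {S S' : Finset (List V)} (h : SwapRel S S') : SwapRel S' S := by
  obtain ⟨R, P, P', v, Q, Q', h, rfl⟩ := h
  exact ⟨R, P', P, v, Q, Q', h.symm, h.eqS⟩

theorem SwapRel.unique {S S' S'' : Finset (List V)}
    (hS : ∀ w ∈ S, ∀ w' ∈ S, wkey w = wkey w' → w = w')
    (h : SwapRel S S') (h' : SwapRel S S'') : S' = S'' := by
  obtain ⟨R, P, P', v, Q, Q', h, rfl⟩ := h
  obtain ⟨R₂, P₂, P₂', v₂, Q₂, Q₂', h₂, rfl⟩ := h'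
  obtain ⟨rfl, rfl, rfl, rfl, rfl, rfl⟩ := h.unique hS h₂
  rfl

theorem properSet_key {E : V → V → Prop} {X Y : Set V} {k : ℕ} {S : Finset (List V)}
    (h : ProperSet E X Y k S) : ∀ w ∈ S, ∀ w' ∈ S, wkey w = wkey w' → w = w' := by
  intro w hw w' hw' e
  by_contra hne
  exact (h.2.2 w hw w' hw' hne).2 (wkey_inj _ _ e)

theorem Sel.nmem {S R : Finset (List V)} {P P' : List V} {v : V} {Q Q' : List V}
    (h : Sel S R P P' v Q Q') : P ++ v :: Q ∉ insert (P' ++ v :: Q') R ∧ P' ++ v :: Q' ∉ R := by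
  have n1 : P ++ v :: Q ∉ R := fun hx => (h.fresh _ hx).1 rfl
  have n2 : P' ++ v :: Q' ∉ R := fun hx => (h.fresh _ hx).2 rfl
  have n3 : P ++ v :: Q ≠ P' ++ v :: Q' := fun e => (h.lt).ne (by rw [e])
  refine ⟨?_, n2⟩
  rw [Finset.mem_insert, not_or]
  exact ⟨n3, n1⟩

theorem SwapRel.prod {S S' : Finset (List V)} (h : SwapRel S S') (F : Type*) [Field F] :
    ∏ w ∈ S', walkMonomial F w = ∏ w ∈ S, walkMonomial F w := by
  obtain ⟨R, P, P', v, Q, Q', h, rfl⟩ := h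
  have n := h.nmem
  have n' := h.symm.nmem
  rw [Finset.prod_insert n'.1, Finset.prod_insert n'.2, h.eqS, Finset.prod_insert n.1,
    Finset.prod_insert n.2, walkMonomial_append F P v Q, walkMonomial_append F P v Q',
    walkMonomial_append F P' v Q, walkMonomial_append F P' v Q']
  ring

theorem SwapRel.cost {S S' : Finset (List V)} (h : SwapRel S S') (c : V × V → ℕ) :
    ∑ w ∈ S', walkCost c w = ∑ w ∈ S, walkCost c w := by
  obtain ⟨R, P, P', v, Q, Q', h, rfl⟩ := h
  have n := h.nmem
  have n' := h.symm.nmem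
  rw [Finset.sum_insert n'.1, Finset.sum_insert n'.2, h.eqS, Finset.sum_insert n.1,
    Finset.sum_insert n.2, walkCost_append c P v Q, walkCost_append c P v Q',
    walkCost_append c P' v Q, walkCost_append c P' v Q']
  ring

theorem head_append (P : List V) (v : V) (Q Q' : List V) :
    (P ++ v :: Q).head? = (P ++ v :: Q').head? := by
  cases P <;> rfl

theorem SwapRel.proper {E : V → V → Prop} {X Y : Set V} (hXY : Disjoint X Y) {k : ℕ}
    {S S' : Finset (List V)} (h : SwapRel S S') (hS : ProperSet E X Y k S) :
    ProperSet E X Y k S' := by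
  obtain ⟨R, P, P', v, Q, Q', h, rfl⟩ := h
  have n := h.nmem
  have n' := h.symm.nmem
  obtain ⟨h1, h2, h3⟩ := hS
  have hw : P ++ v :: Q ∈ S := by rw [h.eqS]; simp
  have hw' : P' ++ v :: Q' ∈ S := by rw [h.eqS]; simp
  have hR : ∀ x ∈ R, x ∈ S := by intro x hx; rw [h.eqS]; simp [hx]
  have hne : P ++ v :: Q ≠ P' ++ v :: Q' := fun e => (h.lt).ne (by rw [e])
  refine ⟨?_, ?_, ?_⟩
  · rw [← h1, h.eqS, Finset.card_insert_of_notMem n.1, Finset.card_insert_of_notMem n.2,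
      Finset.card_insert_of_notMem n'.1, Finset.card_insert_of_notMem n'.2]
  · intro x hx
    rw [Finset.mem_insert, Finset.mem_insert] at hx
    rcases hx with rfl | rfl | hx
    · exact swap_isWalk E X Y hXY P P' v Q Q' (h2 _ hw) (h2 _ hw')
    · exact swap_isWalk E X Y hXY P' P v Q' Q (h2 _ hw') (h2 _ hw)
    · exact h2 x (hR x hx)
  · have a1 : (P' ++ v :: Q).head? = (P' ++ v :: Q').head? := head_append _ _ _ _
    have a2 : (P ++ v :: Q').head? = (P ++ v :: Q).head? := head_append _ _ _ _
    have a3 : (P' ++ v :: Q).getLast? = (P ++ v :: Q).getLast? := by simp [List.getLast?_append, List.getLast?_cons]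
    have a4 : (P ++ v :: Q').getLast? = (P' ++ v :: Q').getLast? := by simp [List.getLast?_append, List.getLast?_cons]
    have b1 := h3 _ hw _ hw' hne
    have b2 : ∀ x ∈ R, x.head? ≠ (P ++ v :: Q).head? ∧ x.getLast? ≠ (P ++ v :: Q).getLast? := by
      intro x hx
      exact h3 x (hR x hx) _ hw (fun e => (h.fresh x hx).1 (by rw [e]))
    have b3 : ∀ x ∈ R, x.head? ≠ (P' ++ v :: Q').head? ∧
        x.getLast? ≠ (P' ++ v :: Q').getLast? := by
      intro x hx
      exact h3 x (hR x hx) _ hw' (fun e => (h.fresh x hx).2 (by rw [e]))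
    intro x hx y hy hxy
    rw [Finset.mem_insert, Finset.mem_insert] at hx hy
    rcases hx with rfl | rfl | hx <;> rcases hy with rfl | rfl | hy
    · exact absurd rfl hxy
    · rw [a1, a2, a3, a4]; exact ⟨b1.1.symm, b1.2⟩
    · rw [a1, a3]; exact ⟨(b3 y hy).1.symm, (b2 y hy).2.symm⟩
    · rw [a1, a2, a3, a4]; exact ⟨b1.1, b1.2.symm⟩
    · exact absurd rfl hxy
    · rw [a2, a4]; exact ⟨(b2 y hy).1.symm, (b3 y hy).2.symm⟩
    · rw [a1, a3]; exact ⟨(b3 x hx).1, (b2 x hx).2⟩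
    · rw [a2, a4]; exact ⟨(b2 x hx).1, (b3 x hx).2⟩
    · exact h3 x (hR x hx) y (hR y hy) hxy

theorem SwapRel.ne {E : V → V → Prop} {X Y : Set V} {k : ℕ}
    {S S' : Finset (List V)} (h : SwapRel S S') (hS : ProperSet E X Y k S) : S' ≠ S := by
  intro e
  obtain ⟨R, P, P', v, Q, Q', h, rfl⟩ := h
  have hw : P ++ v :: Q ∈ S := by rw [h.eqS]; simp
  have hw' : P' ++ v :: Q' ∈ S := by rw [h.eqS]; simp
  have hne : P ++ v :: Q ≠ P' ++ v :: Q' := fun e => (h.lt).ne (by rw [e])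
  have ha : P' ++ v :: Q ∈ S := by rw [← e]; simp
  have := properSet_key hS _ ha _ hw (wkey_append _ _ _ _)
  apply (hS.2.2 _ hw _ hw' hne).1
  rw [← this]
  exact head_append _ _ _ _

theorem edgesOf_functional (w : List V) (hw : w.Nodup) (a b b' : V)
    (h : (a, b) ∈ edgesOf w) (h' : (a, b') ∈ edgesOf w) : b = b' := by
  induction w with
  | nil => simp [edgesOf] at h
  | cons x l ih =>
    cases l with
    | nil => simp [edgesOf] at h
    | cons y l =>
      rw [edgesOf_cons_cons, List.mem_cons] at h h'
      rw [List.nodup_cons] at hw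
      have hm : ∀ c, (x, c) ∉ edgesOf (y :: l) := fun c hc => hw.1 (List.of_mem_zip hc).1
      rcases h with h | h <;> rcases h' with h' | h'
      · simp only [Prod.mk.injEq] at h h'
        rw [h.2, h'.2]
      · simp only [Prod.mk.injEq] at h
        rw [h.1] at h'
        exact absurd h' (hm _)
      · simp only [Prod.mk.injEq] at h'
        rw [h'.1] at h
        exact absurd h (hm _)
      · exact ih hw.2 h h'

theorem follow (D : V × V → Prop) (hD : ∀ a b b', D (a, b) → D (a, b') → b = b') (Y : Set V) :
    ∀ (l l' : List V) (a : V), (∀ e ∈ edgesOf (a :: l), D e) → (∀ e ∈ edgesOf (a :: l'), D e) →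
    (∀ b, (a :: l).getLast? = some b → b ∈ Y) → (∀ b, (a :: l').getLast? = some b → b ∈ Y) →
    (∀ v ∈ (a :: l).dropLast, v ∉ Y) → (∀ v ∈ (a :: l').dropLast, v ∉ Y) → l = l' := by
  intro l
  induction l with
  | nil =>
    intro l' a h1 h2 h3 h4 h5 h6
    cases l' with
    | nil => rfl
    | cons b l' => exact absurd (h3 a (by simp)) (h6 a (by simp))
  | cons b l ih =>
    intro l' a h1 h2 h3 h4 h5 h6
    cases l' with
    | nil => exact absurd (h4 a (by simp)) (h5 a (by simp))
    | cons b' l' =>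
      rw [edgesOf_cons_cons] at h1 h2
      have e : b = b' := hD a b b' (h1 _ (by simp)) (h2 _ (by simp))
      subst e
      rw [List.getLast?_cons_cons] at h3 h4
      rw [List.dropLast_cons_cons] at h5 h6
      rw [ih l' b (fun e he => h1 e (by simp [he])) (fun e he => h2 e (by simp [he])) h3 h4
        (fun v hv => h5 v (by simp [hv])) (fun v hv => h6 v (by simp [hv]))]

/-- The exponent of the monomial of a set of walks. -/
def expo (S : Finset (List V)) : (V × V) →₀ ℕ :=
  ∑ w ∈ S, Multiset.toFinsupp (edgesOf w : Multiset (V × V))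

theorem walkMonomial_eq (F : Type*) [Field F] (w : List V) :
    walkMonomial F w =
      MvPolynomial.monomial (Multiset.toFinsupp (edgesOf w : Multiset (V × V))) 1 := by
  unfold walkMonomial
  induction edgesOf w with
  | nil => simp
  | cons e l ih =>
    rw [List.map_cons, List.prod_cons, ih, ← Multiset.cons_coe, ← Multiset.singleton_add,
      map_add, Multiset.toFinsupp_singleton, MvPolynomial.X, MvPolynomial.monomial_mul, one_mul]

theorem prod_walkMonomial (F : Type*) [Field F] (S : Finset (List V)) :
    ∏ w ∈ S, walkMonomial F w = MvPolynomial.monomial (expo S) 1 := by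
  unfold expo
  rw [MvPolynomial.monomial_sum_one]
  exact Finset.prod_congr rfl (fun w _ => walkMonomial_eq F w)

theorem expo_ne (S : Finset (List V)) (e : V × V) :
    expo S e ≠ 0 ↔ ∃ w ∈ S, e ∈ edgesOf w := by
  unfold expo
  rw [Finsupp.finsetSum_apply, Ne, Finset.sum_eq_zero_iff]
  push Not
  simp [Multiset.toFinsupp_apply, List.count_eq_zero]

theorem expo_unique (E : V → V → Prop) (X Y : Set V) (hXY : Disjoint X Y) (k : ℕ)
    (S S' : Finset (List V)) (hS : ProperSet E X Y k S) (hS' : ProperSet E X Y k S')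
    (hd : ∀ w ∈ S, ∀ w' ∈ S, w ≠ w' → ∀ v, v ∈ w → v ∉ w')
    (hn : ∀ w ∈ S, w.Nodup) (he : expo S' = expo S) : S' = S := by
  apply Finset.eq_of_subset_of_card_le
  · intro w' hw'
    have hD : ∀ a b b', (∃ w ∈ S, (a, b) ∈ edgesOf w) → (∃ w ∈ S, (a, b') ∈ edgesOf w) →
        b = b' := by
      rintro a b b' ⟨w, hw, h⟩ ⟨w₂, hw₂, h₂⟩
      by_cases hne : w = w₂
      · subst hne
        exact edgesOf_functional w (hn w hw) a b b' h h₂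
      · exact absurd (List.of_mem_zip h₂).1 (hd w hw w₂ hw₂ hne a (List.of_mem_zip h).1)
    have hE : ∀ e ∈ edgesOf w', ∃ w ∈ S, e ∈ edgesOf w := by
      intro e hee
      rw [← expo_ne, ← he, expo_ne]
      exact ⟨w', hw', hee⟩
    have hlen := (hS'.2.1 w' hw').1
    obtain ⟨-, -, h3, h4, h5, h6⟩ := (isWalk_iff E X Y hXY w').1 (hS'.2.1 w' hw')
    rcases w' with _ | ⟨x, _ | ⟨b, l'⟩⟩
    · simp at hlen
    · simp at hlen
    · obtain ⟨w, hw, hxw⟩ := hE (x, b) (by rw [edgesOf_cons_cons]; simp)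
      have hx : x ∈ X := h3 x rfl
      have hxm := (List.of_mem_zip hxw).1
      obtain ⟨-, -, g3, g4, g5, g6⟩ := (isWalk_iff E X Y hXY w).1 (hS.2.1 w hw)
      rcases w with _ | ⟨y, l⟩
      · simp at hxm
      · rcases List.mem_cons.1 hxm with rfl | hxl
        · have := follow (fun e => ∃ w ∈ S, e ∈ edgesOf w) hD Y l (b :: l') x
            (fun e hee => ⟨_, hw, hee⟩) hE g4 h4 g6 h6
          rw [← this]; exact hw
        · exact absurd hx (g5 x hxl)
  · rw [hS.1, hS'.1]

/-- Over a field of characteristic two, the polynomial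
`CQ = ∑_{S} ∏_{W ∈ S} M_W`, the sum ranging over all proper sets `S` of `k`
walks of total cost at most `U`, is nonzero iff there is a proper set of `k`
pairwise vertex-disjoint walks of total cost at most `U`. -/
theorem cost_walk_polynomial_ne_zero_iff (E : V → V → Prop) (X Y : Set V)
    (hXY : Disjoint X Y) (k : ℕ) (C : ℕ) (c : V × V → ℕ)
    (hc : ∀ u v, E u v → c (u, v) ∈ Finset.Icc 1 C)
    (U : ℕ) (F : Type*) [Field F] [CharP F 2]
    (fam : Set (Finset (List V)))
    (hfam : fam = {S | ProperSet E X Y k S ∧ (∑ w ∈ S, walkCost c w) ≤ U})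
    (hfin : fam.Finite) :
    (∑ S ∈ hfin.toFinset, ∏ w ∈ S, walkMonomial F w) ≠ 0 ↔
      ∃ S : Finset (List V), ProperSet E X Y k S ∧
        (∑ w ∈ S, walkCost c w) ≤ U ∧
        ∀ w ∈ S, ∀ w' ∈ S, w ≠ w' → ∀ v, v ∈ w → v ∉ w' := by
  have hmem : ∀ S, S ∈ hfin.toFinset ↔
      (ProperSet E X Y k S ∧ (∑ w ∈ S, walkCost c w) ≤ U) := by
    intro S; rw [Set.Finite.mem_toFinset, hfam]; rfl
  constructor
  · intro hne
    by_contra hno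
    apply hne
    have hex : ∀ S ∈ hfin.toFinset, ∃ S', SwapRel S S' := by
      intro S hS
      obtain ⟨h1, h2⟩ := (hmem S).1 hS
      by_cases hbad : ∃ w ∈ S, ∃ w' ∈ S, wkey w < wkey w' ∧ ∃ u ∈ loopErase w, u ∈ w'
      · obtain ⟨R, P, P', v, Q, Q', h⟩ := Sel.exists (properSet_key h1) hbad
        exact ⟨_, R, P, P', v, Q, Q', h, rfl⟩
      · exfalso
        push Not at hbad
        obtain ⟨g1, g2, g3, -⟩ := erase_proper E X Y hXY k c S h1 (by
          intro w hw w' hw' hne v hv hv'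
          rcases lt_trichotomy (wkey w) (wkey w') with hlt | heq | hlt
          · exact hbad w hw w' hw' hlt v hv (loopErase_subset _ _ hv')
          · exact hne (properSet_key h1 w hw w' hw' heq)
          · exact hbad w' hw' w hw hlt v hv' (loopErase_subset _ _ hv))
        exact hno ⟨_, g1, g2.trans h2, g3⟩
    choose g hg using hex
    have gmem : ∀ S hS, g S hS ∈ hfin.toFinset := by
      intro S hS
      obtain ⟨h1, h2⟩ := (hmem S).1 hS
      rw [hmem]
      exact ⟨(hg S hS).proper hXY h1, by rw [(hg S hS).cost c]; exact h2⟩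
    refine Finset.sum_involution g ?_ ?_ gmem ?_
    · intro S hS
      rw [(hg S hS).prod F]
      exact CharTwo.add_self_eq_zero _
    · intro S hS _
      exact (hg S hS).ne ((hmem S).1 hS).1
    · intro S hS
      have h1 := ((hmem _).1 (gmem S hS)).1
      exact SwapRel.unique (properSet_key h1) (hg _ (gmem S hS)) (hg S hS).symm
  · rintro ⟨S₀, h1, h2, h3⟩ hzero
    obtain ⟨g1, g2, g3, g4⟩ := erase_proper E X Y hXY k c S₀ h1 (by
      intro w hw w' hw' hne v hv hv'
      exact h3 w hw w' hw' hne v (loopErase_subset _ _ hv) (loopErase_subset _ _ hv'))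
    generalize S₀.image loopErase = S at g1 g2 g3 g4
    have hco := congrArg (MvPolynomial.coeff (expo S)) hzero
    rw [MvPolynomial.coeff_sum, MvPolynomial.coeff_zero, Finset.sum_eq_single S] at hco
    · rw [prod_walkMonomial, MvPolynomial.coeff_monomial, if_pos rfl] at hco
      exact one_ne_zero hco
    · intro S' hS' hne
      rw [prod_walkMonomial, MvPolynomial.coeff_monomial, if_neg]
      intro he
      exact hne (expo_unique E X Y hXY k S S' g1 ((hmem S').1 hS').1 g3 g4 he)
    · intro hS
      exact absurd ((hmem S).2 ⟨g1, g2.trans h2⟩) hS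

end
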